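/- arXiv:2603.29348 — 3 statements merged into one kernel-verified Lean document; each statement's English description precedes it below -/
import Mathlib

section
/- Let ψ : ℝ^n → ℝ be μ-strongly convex (μ > 0) and f_1, …, f_m : ℝ^n → ℝ convex and differentiable. Fix x ∈ ℝ^n, x* ∈ ∂ψ(x), a subset J ⊆ {1,…,m}, weights w_i > 0 with ∑_{i∈J} w_i = 1, a stepsize t ≥ 0, and set g = ∑_{i∈J} w_i ∇f_i(x), x⁺* = x* − t·g, x⁺ = ∇ψ*(x⁺*). Then x⁺* ∈ ∂ψ(x⁺), and for every z ∈ ℝ^n: D_ψ^{x⁺*}(x⁺, z) ≤ D_ψ^{x*}(x, z) − t·∑_{i∈J} w_i(f_i(x) − f_i(z)) + (t²/(2μ))·‖g‖². -/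
/-!
Let `p ∈ ∂ψ(u)`. Strong convexity at `u` and Young's inequality give, for every `q`,
`⟪q, u⟫ - ψ u ≤ ψ*(q) ≤ ⟪q, u⟫ - ψ u + ‖q - p‖² / (2μ)`, so `ψ*` is differentiable at `p` with
gradient `u`. Such a `u` exists for every `p`, because `⟪p, ·⟫ - ψ` is continuous with bounded
superlevel sets; this identifies `x⁺` and gives the subgradient claim. In the descent estimate the
three-point identity for Bregman distances leaves the error
`⟪x* - x⁺*, x - x⁺⟫ - D_ψ^{x*}(x, x⁺)`, which strong convexity and Young's inequality bound by
`‖x* - x⁺*‖² / (2μ)`; the subgradient inequality for `∑ i ∈ J, w i * f i` at `x` does the rest.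
-/

open MeasureTheory ProbabilityTheory RealInnerProductSpace
open scoped BigOperators

noncomputable section

/-- `xs` is a subgradient of `ψ` at `x`: `ψ(y) ≥ ψ(x) + ⟨xs, y - x⟩` for all `y`. -/
def IsSubgrad {n : ℕ} (ψ : EuclideanSpace ℝ (Fin n) → ℝ) (x xs : EuclideanSpace ℝ (Fin n)) : Prop :=
  ∀ y, ψ x + ⟪xs, y - x⟫ ≤ ψ y

/-- Bregman distance `D_ψ^{xs}(x, y) = ψ(y) - ψ(x) - ⟨xs, y - x⟩`. -/
def Breg {n : ℕ} (ψ : EuclideanSpace ℝ (Fin n) → ℝ) (x xs y : EuclideanSpace ℝ (Fin n)) : ℝ :=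
  ψ y - ψ x - ⟪xs, y - x⟫

/-- `ψ` is `α`-strongly convex:
`ψ(y) ≥ ψ(x) + ⟨xs, y - x⟩ + (α/2)‖y - x‖²` for all `x, y` and all subgradients `xs ∈ ∂ψ(x)`. -/
def SubgradStrongConvex {n : ℕ} (ψ : EuclideanSpace ℝ (Fin n) → ℝ) (α : ℝ) : Prop :=
  ∀ x y xs, IsSubgrad ψ x xs → ψ x + ⟪xs, y - x⟫ + α / 2 * ‖y - x‖ ^ 2 ≤ ψ y

/-- Fenchel conjugate `ψ*(p) = sup_z (⟨p, z⟩ - ψ(z))`. -/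
def fenchel {n : ℕ} (ψ : EuclideanSpace ℝ (Fin n) → ℝ) (p : EuclideanSpace ℝ (Fin n)) : ℝ :=
  ⨆ z, (⟪p, z⟫ - ψ z)

/-- `xhat` is the Bregman projection of `x` onto `C` w.r.t. `ψ` and the subgradient `xs`:
it belongs to `C` and minimizes `y ↦ D_ψ^{xs}(x, y)` over `C`. -/
def IsBregProj {n : ℕ} (ψ : EuclideanSpace ℝ (Fin n) → ℝ) (x xs : EuclideanSpace ℝ (Fin n))
    (C : Set (EuclideanSpace ℝ (Fin n))) (xhat : EuclideanSpace ℝ (Fin n)) : Prop :=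
  xhat ∈ C ∧ ∀ y ∈ C, Breg ψ x xs xhat ≤ Breg ψ x xs y

/-- The proximity objective `F(x) = (1/m) ∑_{i=1}^m f_i(x)`. -/
def Fobj {n m : ℕ} (f : Fin m → EuclideanSpace ℝ (Fin n) → ℝ) (v : EuclideanSpace ℝ (Fin n)) : ℝ :=
  (m : ℝ)⁻¹ * ∑ i, f i v

/-- The set of (global) minimizers of `F = (1/m) ∑ f_i`. -/
def ArgminSet {n m : ℕ} (f : Fin m → EuclideanSpace ℝ (Fin n) → ℝ) :
    Set (EuclideanSpace ℝ (Fin n)) :=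
  {z | ∀ y, Fobj f z ≤ Fobj f y}

/-- Squared Bregman distance from `z` (with subgradient `zs`) to a set `X`:
`inf_{w ∈ X} D_ψ^{zs}(z, w)`. -/
def distSq {n : ℕ} (ψ : EuclideanSpace ℝ (Fin n) → ℝ) (z zs : EuclideanSpace ℝ (Fin n))
    (X : Set (EuclideanSpace ℝ (Fin n))) : ℝ :=
  ⨅ w : X, Breg ψ z zs (w : EuclideanSpace ℝ (Fin n))

lemma real_inner_le_norm_sq_add_norm_sq {E : Type*} [SeminormedAddCommGroup E]
    [InnerProductSpace ℝ E] {μ : ℝ} (hμ : 0 < μ) (a b : E) :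
    ⟪a, b⟫ ≤ 1 / (2 * μ) * ‖a‖ ^ 2 + μ / 2 * ‖b‖ ^ 2 := by
  have hsq : 1 / (2 * μ) * ‖a‖ ^ 2 + μ / 2 * ‖b‖ ^ 2 - ‖a‖ * ‖b‖ =
      1 / (2 * μ) * (‖a‖ - μ * ‖b‖) ^ 2 := by
    field_simp
    ring
  have hnonneg : 0 ≤ 1 / (2 * μ) * (‖a‖ - μ * ‖b‖) ^ 2 := by positivity
  linarith [real_inner_le_norm a b]

lemma add_le_of_convexOn_of_hasLineDerivAt {E : Type*} [AddCommGroup E] [Module ℝ E] {s : Set E}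
    {f : E → ℝ} (hf : ConvexOn ℝ s f) {x y : E} (hx : x ∈ s) (hy : y ∈ s) {d : ℝ}
    (hd : HasLineDerivAt ℝ f d x (y - x)) : f x + d ≤ f y := by
  have hline : f ∘ AffineMap.lineMap x y = fun t : ℝ => f (x + t • (y - x)) := by
    ext t
    simp [AffineMap.lineMap_apply, add_comm]
  have hconv := hf.comp_affineMap (AffineMap.lineMap (k := ℝ) x y)
  rw [hline] at hconv
  have hslope := hconv.le_slope_of_hasDerivAt (by simpa using hx) (by simpa using hy) one_pos hd
  simp only [slope_def_field, one_smul, add_sub_cancel, zero_smul, add_zero, sub_zero,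
    div_one] at hslope
  linarith

section MirrorDescent

variable {n : ℕ} {ψ : EuclideanSpace ℝ (Fin n) → ℝ} {μ : ℝ}
  {x xs u p : EuclideanSpace ℝ (Fin n)}

lemma isSubgrad_iff_inner_sub_le :
    IsSubgrad ψ u p ↔ ∀ y, ⟪p, y⟫ - ψ y ≤ ⟪p, u⟫ - ψ u := by
  refine forall_congr' fun y => ?_
  rw [inner_sub_right]
  constructor <;> intro h <;> linarith

lemma IsSubgrad.fenchel_eq (hp : IsSubgrad ψ u p) : fenchel ψ p = ⟪p, u⟫ - ψ u :=
  IsGreatest.csSup_eq ⟨⟨u, rfl⟩, Set.forall_mem_range.2 (isSubgrad_iff_inner_sub_le.1 hp)⟩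

lemma isSubgrad_of_hasGradientAt (hψ : ConvexOn ℝ Set.univ ψ) (hp : HasGradientAt ψ p u) :
    IsSubgrad ψ u p := fun y =>
  add_le_of_convexOn_of_hasLineDerivAt hψ (Set.mem_univ u) (Set.mem_univ y)
    (by simpa using hp.hasFDerivAt.hasLineDerivAt (y - u))

lemma isSubgrad_sum_smul {ι : Type*} {f : ι → EuclideanSpace ℝ (Fin n) → ℝ}
    {g : ι → EuclideanSpace ℝ (Fin n)} {J : Finset ι} {w : ι → ℝ} (hw : ∀ i ∈ J, 0 ≤ w i)
    (hg : ∀ i ∈ J, IsSubgrad (f i) x (g i)) :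
    IsSubgrad (fun y => ∑ i ∈ J, w i * f i y) x (∑ i ∈ J, w i • g i) := fun y =>
  calc ∑ i ∈ J, w i * f i x + ⟪∑ i ∈ J, w i • g i, y - x⟫
      = ∑ i ∈ J, w i * (f i x + ⟪g i, y - x⟫) := by
        simp only [sum_inner, real_inner_smul_left, mul_add, Finset.sum_add_distrib]
    _ ≤ ∑ i ∈ J, w i * f i y :=
        Finset.sum_le_sum fun i hi => mul_le_mul_of_nonneg_left (hg i hi y) (hw i hi)

lemma breg_eq_breg_sub_breg_add_inner (x xs u p z : EuclideanSpace ℝ (Fin n)) :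
    Breg ψ u p z = Breg ψ x xs z - Breg ψ x xs u + ⟪xs - p, z - u⟫ := by
  simp only [Breg, inner_sub_left, inner_sub_right]
  ring

namespace SubgradStrongConvex

lemma le_breg (hsc : SubgradStrongConvex ψ μ) (hxs : IsSubgrad ψ x xs)
    (y : EuclideanSpace ℝ (Fin n)) : μ / 2 * ‖y - x‖ ^ 2 ≤ Breg ψ x xs y := by
  have := hsc x y xs hxs
  unfold Breg
  linarith

lemma inner_sub_breg_le (hμ : 0 < μ) (hsc : SubgradStrongConvex ψ μ) (hxs : IsSubgrad ψ x xs)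
    (d y : EuclideanSpace ℝ (Fin n)) :
    ⟪d, y - x⟫ - Breg ψ x xs y ≤ 1 / (2 * μ) * ‖d‖ ^ 2 := by
  linarith [real_inner_le_norm_sq_add_norm_sq hμ d (y - x), hsc.le_breg hxs y]

lemma norm_sub_le_of_inner_sub_le (hμ : 0 < μ) (hsc : SubgradStrongConvex ψ μ)
    (hxs : IsSubgrad ψ x xs) {y : EuclideanSpace ℝ (Fin n)}
    (hy : ⟪p, x⟫ - ψ x ≤ ⟪p, y⟫ - ψ y) : ‖y - x‖ ≤ 2 * ‖p - xs‖ / μ := by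
  have hquad : μ / 2 * ‖y - x‖ ^ 2 ≤ ‖p - xs‖ * ‖y - x‖ :=
    calc μ / 2 * ‖y - x‖ ^ 2 ≤ Breg ψ x xs y := hsc.le_breg hxs y
      _ ≤ ⟪p - xs, y - x⟫ := by
        simp only [Breg, inner_sub_left, inner_sub_right]
        linarith
      _ ≤ ‖p - xs‖ * ‖y - x‖ := real_inner_le_norm _ _
  rcases (norm_nonneg (y - x)).eq_or_lt with hzero | hpos
  · rw [← hzero]
    positivity
  · have : μ / 2 * ‖y - x‖ ≤ ‖p - xs‖ := le_of_mul_le_mul_right (by linarith) hpos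
    rw [le_div_iff₀ hμ]
    linarith

lemma exists_isSubgrad (hμ : 0 < μ) (hψ : ConvexOn ℝ Set.univ ψ) (hsc : SubgradStrongConvex ψ μ)
    (hxs : IsSubgrad ψ x xs) (p : EuclideanSpace ℝ (Fin n)) : ∃ u, IsSubgrad ψ u p := by
  have hcont : Continuous fun y => ⟪p, y⟫ - ψ y := by
    have := hψ.locallyLipschitz.continuous
    fun_prop
  have hbdd : Bornology.IsBounded {y | ⟪p, x⟫ - ψ x ≤ ⟪p, y⟫ - ψ y} :=
    Metric.isBounded_closedBall.subset fun _ hy =>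
      mem_closedBall_iff_norm.2 (hsc.norm_sub_le_of_inner_sub_le hμ hxs hy)
  obtain ⟨u, hu⟩ := hcont.exists_forall_ge_of_isBounded x hbdd
  exact ⟨u, isSubgrad_iff_inner_sub_le.2 hu⟩

lemma inner_sub_le (hμ : 0 < μ) (hsc : SubgradStrongConvex ψ μ) (hp : IsSubgrad ψ u p)
    (q y : EuclideanSpace ℝ (Fin n)) :
    ⟪q, y⟫ - ψ y ≤ ⟪q, u⟫ - ψ u + 1 / (2 * μ) * ‖q - p‖ ^ 2 := by
  have h := hsc.inner_sub_breg_le hμ hp (q - p) y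
  simp only [Breg, inner_sub_left, inner_sub_right] at h
  linarith

lemma inner_sub_le_fenchel (hμ : 0 < μ) (hsc : SubgradStrongConvex ψ μ) (hp : IsSubgrad ψ u p)
    (q y : EuclideanSpace ℝ (Fin n)) : ⟪q, y⟫ - ψ y ≤ fenchel ψ q :=
  le_ciSup (f := fun y => ⟪q, y⟫ - ψ y)
    ⟨_, Set.forall_mem_range.2 (hsc.inner_sub_le hμ hp q)⟩ y

lemma fenchel_le (hμ : 0 < μ) (hsc : SubgradStrongConvex ψ μ) (hp : IsSubgrad ψ u p)
    (q : EuclideanSpace ℝ (Fin n)) :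
    fenchel ψ q ≤ ⟪q, u⟫ - ψ u + 1 / (2 * μ) * ‖q - p‖ ^ 2 :=
  ciSup_le (hsc.inner_sub_le hμ hp q)

lemma hasGradientAt_fenchel (hμ : 0 < μ) (hsc : SubgradStrongConvex ψ μ)
    (hp : IsSubgrad ψ u p) : HasGradientAt (fenchel ψ) u p := by
  have hremainder (q : EuclideanSpace ℝ (Fin n)) :
      |fenchel ψ q - fenchel ψ p - ⟪u, q - p⟫| ≤ 1 / (2 * μ) * ‖q - p‖ ^ 2 := by
    have hlower := hsc.inner_sub_le_fenchel hμ hp q u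
    have hupper := hsc.fenchel_le hμ hp q
    rw [hp.fenchel_eq, real_inner_comm (q - p) u, inner_sub_left,
      abs_of_nonneg (by linarith)]
    linarith
  rw [hasGradientAt_iff_isLittleO]
  exact (Asymptotics.IsBigO.of_bound (1 / (2 * μ)) <| .of_forall fun q => by
    simpa using hremainder q).trans_isLittleO (Asymptotics.isLittleO_pow_sub_sub p one_lt_two)

lemma breg_sub_le (hμ : 0 < μ) (hsc : SubgradStrongConvex ψ μ) (hxs : IsSubgrad ψ x xs)
    (d u z : EuclideanSpace ℝ (Fin n)) :
    Breg ψ u (xs - d) z ≤ Breg ψ x xs z + ⟪d, z - x⟫ + 1 / (2 * μ) * ‖d‖ ^ 2 :=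
  calc Breg ψ u (xs - d) z
      = Breg ψ x xs z + ⟪d, z - x⟫ + (⟪-d, u - x⟫ - Breg ψ x xs u) := by
        rw [breg_eq_breg_sub_breg_add_inner x xs u, sub_sub_cancel]
        simp only [inner_neg_left, inner_sub_right]
        ring
    _ ≤ Breg ψ x xs z + ⟪d, z - x⟫ + 1 / (2 * μ) * ‖d‖ ^ 2 := by
        gcongr
        simpa using hsc.inner_sub_breg_le hμ hxs (-d) u

end SubgradStrongConvex

theorem stmt7_general {ι : Type*} (hμ : 0 < μ) (hψ : ConvexOn ℝ Set.univ ψ)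
    (hsc : SubgradStrongConvex ψ μ) (hxs : IsSubgrad ψ x xs)
    {f : ι → EuclideanSpace ℝ (Fin n) → ℝ} {g : ι → EuclideanSpace ℝ (Fin n)} {J : Finset ι}
    (hg : ∀ i ∈ J, IsSubgrad (f i) x (g i)) {w : ι → ℝ} (hw : ∀ i ∈ J, 0 ≤ w i)
    {t : ℝ} (ht : 0 ≤ t) :
    IsSubgrad ψ (gradient (fenchel ψ) (xs - t • ∑ i ∈ J, w i • g i))
      (xs - t • ∑ i ∈ J, w i • g i) ∧
    ∀ z, Breg ψ (gradient (fenchel ψ) (xs - t • ∑ i ∈ J, w i • g i))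
        (xs - t • ∑ i ∈ J, w i • g i) z ≤
      Breg ψ x xs z - t * ∑ i ∈ J, w i * (f i x - f i z) +
        t ^ 2 / (2 * μ) * ‖∑ i ∈ J, w i • g i‖ ^ 2 := by
  have hsum := isSubgrad_sum_smul hw hg
  set G := ∑ i ∈ J, w i • g i
  obtain ⟨u, hu⟩ := hsc.exists_isSubgrad hμ hψ hxs (xs - t • G)
  rw [(hsc.hasGradientAt_fenchel hμ hu).gradient]
  refine ⟨hu, fun z => ?_⟩
  have hinner : ⟪G, z - x⟫ ≤ -∑ i ∈ J, w i * (f i x - f i z) := by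
    simp only [mul_sub, Finset.sum_sub_distrib]
    linarith [hsum z]
  calc Breg ψ u (xs - t • G) z
      ≤ Breg ψ x xs z + ⟪t • G, z - x⟫ + 1 / (2 * μ) * ‖t • G‖ ^ 2 :=
        hsc.breg_sub_le hμ hxs (t • G) u z
    _ = Breg ψ x xs z + t * ⟪G, z - x⟫ + t ^ 2 / (2 * μ) * ‖G‖ ^ 2 := by
        rw [real_inner_smul_left, norm_smul, mul_pow, Real.norm_eq_abs, sq_abs]
        ring
    _ ≤ Breg ψ x xs z + t * -∑ i ∈ J, w i * (f i x - f i z) + t ^ 2 / (2 * μ) * ‖G‖ ^ 2 := by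
        gcongr
    _ = _ := by ring

end MirrorDescent

/-- one step of stochastic mirror descent. With `g = ∑_{i∈J} w_i ∇f_i(x)`,
`x⁺* = xs − t·g` and `x⁺ = ∇ψ*(x⁺*)`, one has `x⁺* ∈ ∂ψ(x⁺)` and for every `z`:
`D_ψ^{x⁺*}(x⁺, z) ≤ D_ψ^{xs}(x, z) − t·∑ w_i (f_i(x) − f_i(z)) + (t²/(2μ))‖g‖²`. -/
theorem stmt7 {n m : ℕ} (ψ : EuclideanSpace ℝ (Fin n) → ℝ) (μ : ℝ) (hμ : 0 < μ)
    (hψconv : ConvexOn ℝ Set.univ ψ) (hsc : SubgradStrongConvex ψ μ)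
    (f : Fin m → EuclideanSpace ℝ (Fin n) → ℝ)
    (hfconv : ∀ i, ConvexOn ℝ Set.univ (f i))
    (f' : Fin m → EuclideanSpace ℝ (Fin n) → EuclideanSpace ℝ (Fin n))
    (hdiff : ∀ i z, HasGradientAt (f i) (f' i z) z)
    (x xs : EuclideanSpace ℝ (Fin n)) (hxs : IsSubgrad ψ x xs)
    (J : Finset (Fin m)) (w : Fin m → ℝ)
    (hw : ∀ i ∈ J, 0 < w i) (hwsum : ∑ i ∈ J, w i = 1)
    (t : ℝ) (ht : 0 ≤ t) :
    IsSubgrad ψ (gradient (fenchel ψ) (xs - t • ∑ i ∈ J, w i • f' i x))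
      (xs - t • ∑ i ∈ J, w i • f' i x) ∧
    ∀ z, Breg ψ (gradient (fenchel ψ) (xs - t • ∑ i ∈ J, w i • f' i x))
        (xs - t • ∑ i ∈ J, w i • f' i x) z ≤
      Breg ψ x xs z - t * ∑ i ∈ J, w i * (f i x - f i z) +
        t ^ 2 / (2 * μ) * ‖∑ i ∈ J, w i • f' i x‖ ^ 2 :=
  stmt7_general hμ hψconv hsc hxs (fun i _ => isSubgrad_of_hasGradientAt (hfconv i) (hdiff i x))
    (fun i hi => (hw i hi).le) ht
end
end

section
/- Let ψ : ℝ^n → ℝ be μ-strongly convex (μ > 0) and f_1, …, f_m : ℝ^n → ℝ convex and differentiable with L_i-Lipschitz gradients; L_max = max_i L_i. Fix K ≥ 1, subsets J_0, …, J_{K−1} ⊆ {1,…,m}, weights w_{i,k} > 0 with ∑_{i∈J_k} w_{i,k} = 1, and lower bounds l_{J_k}* ≤ inf_{x} ∑_{i∈J_k} w_{i,k} f_i(x). Let {λ_k} be a nonincreasing sequence with 0 < λ_k ≤ 1, λ_{-1} = λ_0, t_{-1} = γ_b > 0, and generate (x_k, x_k*) for k = 0, …, K by x_{k+1}* = x_k*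 − t_k·∑_{i∈J_k} w_{i,k}∇f_i(x_k), x_{k+1} = ∇ψ*(x_{k+1}*), starting from x_0 ∈ ℝ^n, x_0* ∈ ∂ψ(x_0), where t_k is the DecmSPS stepsize t_k = λ_k·min{ μ·(∑_{i∈J_k} w_{i,k}(f_i(x_k) − l_{J_k}*)) / ‖∑_{i∈J_k} w_{i,k}∇f_i(x_k)‖² , t_{k−1}/λ_{k−1} } (first argument +∞ if the gradient sum is 0). Fix x̂ ∈ ℝ^n, let D = max_{0≤k≤K−1} D_ψ^{x_k*}(x_k, x̂) and L̃ = min{μ/(2 L_max), γ_b/λ_0}. Then ∑_{k=0}^{K−1} ∑_{i∈J_k} w_{i,k}(f_i(x_k) − f_i(x̂)) ≤ 2D/(λ_{K−1}·L̃) + ∑_{k=0}^{K−1} λ_k·∑_{i∈J_k} w_{i,k}(f_i(x̂) − l_{J_k}*). -/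
/-!
Only the objectives `F k y = ∑ i ∈ J k, w k i * f i y` matter: each is convex with
`L_max`-Lipschitz gradient. Put `a k = F k (x k) - F k x̂`, `b k = F k x̂ - l k ≥ 0` and
`D k = D_ψ^{x_k*}(x_k, x̂)`. As `x_k* ∈ ∂ψ(x_k)` throughout, strong convexity of `ψ` and the Polyak
cap `t k * ‖∇F k (x k)‖² ≤ λ k * μ * (a k + b k)` on the stepsize turn one mirror descent step into
`t k * (a k - λ k / 2 * (a k + b k)) ≤ D k - D (k + 1)`.

The `a k` may be negative, so their factors `1 - λ k / 2` cannot be bounded termwise by `1 / 2`.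
Instead one divides by `t k * (1 - λ k / 2)`, which is nonincreasing in `k`: the ratio `t k / λ k`
is nonincreasing by the stepsize rule and `u ↦ u * (1 - u / 2)` is increasing on `[0, 1]`.
Summation by parts bounds the resulting weighted sum of `D k - D (k + 1)` by
`2 * max D / t (K - 1)`, and `t k ≥ λ k * L̃` because `‖∇F k‖² ≤ 2 * L_max * (F k - l k)`.
-/

open MeasureTheory ProbabilityTheory RealInnerProductSpace
open scoped BigOperators

noncomputable section

section Smooth

variable {E : Type*} [NormedAddCommGroup E] [InnerProductSpace ℝ E]

lemma real_inner_le_norm_sq_div_add {μ : ℝ} (hμ : 0 < μ) (u v : E) :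
    ⟪u, v⟫ ≤ ‖u‖ ^ 2 / (2 * μ) + μ / 2 * ‖v‖ ^ 2 :=
  calc
    ⟪u, v⟫ ≤ 2 * ‖v‖ * ‖u‖ / 2 := by linarith [real_inner_le_norm u v]
    _ ≤ (μ * ‖v‖ ^ 2 + μ⁻¹ * ‖u‖ ^ 2) / 2 := by gcongr; exact two_mul_le_add_mul_sq hμ
    _ = ‖u‖ ^ 2 / (2 * μ) + μ / 2 * ‖v‖ ^ 2 := by field_simp; ring

lemma norm_sum_smul_sub_sum_smul_le {ι : Type*} {s : Finset ι} {w : ι → ℝ} {u v : ι → E} {c : ℝ}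
    (hw : ∀ i ∈ s, 0 ≤ w i) (hw₁ : ∑ i ∈ s, w i = 1) (huv : ∀ i ∈ s, ‖u i - v i‖ ≤ c) :
    ‖∑ i ∈ s, w i • u i - ∑ i ∈ s, w i • v i‖ ≤ c := by
  simp only [← Finset.sum_sub_distrib, ← smul_sub]
  exact mem_closedBall_zero_iff.1 <|
    (convex_closedBall 0 c).sum_mem hw hw₁ fun i hi => mem_closedBall_zero_iff.2 (huv i hi)

lemma convexOn_sum_mul {ι : Type*} {s : Finset ι} {C : Set E} {w : ι → ℝ} {f : ι → E → ℝ}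
    (hC : Convex ℝ C) (hw : ∀ i ∈ s, 0 ≤ w i) (hf : ∀ i ∈ s, ConvexOn ℝ C (f i)) :
    ConvexOn ℝ C fun x => ∑ i ∈ s, w i * f i x := by
  simp only [← Finset.sum_fn]
  exact Finset.sum_induction _ (ConvexOn ℝ C) (fun _ _ => ConvexOn.add) (convexOn_const 0 hC)
    fun i hi => (hf i hi).smul (hw i hi)

variable [CompleteSpace E]

lemma hasGradientAt_sum_mul {ι : Type*} {s : Finset ι} {w : ι → ℝ} {f : ι → E → ℝ} {f' : ι → E}
    {x : E} (hf : ∀ i ∈ s, HasGradientAt (f i) (f' i) x) :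
    HasGradientAt (fun y => ∑ i ∈ s, w i * f i y) (∑ i ∈ s, w i • f' i) x := by
  rw [hasGradientAt_iff_hasFDerivAt]
  simpa using HasFDerivAt.fun_sum fun i hi => (hf i hi).hasFDerivAt.const_mul (w i)

lemma hasDerivAt_comp_lineMap {f : E → ℝ} {g x y : E} {s : ℝ}
    (hf : HasGradientAt f g (AffineMap.lineMap x y s)) :
    HasDerivAt (fun s : ℝ => f (AffineMap.lineMap x y s)) ⟪g, y - x⟫ s :=
  hf.hasFDerivAt.comp_hasDerivAt s AffineMap.hasDerivAt_lineMap

lemma add_inner_gradient_le_of_convexOn {f : E → ℝ} {g x : E} (hf : ConvexOn ℝ Set.univ f)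
    (hg : HasGradientAt f g x) (y : E) : f x + ⟪g, y - x⟫ ≤ f y := by
  have hconv : ConvexOn ℝ Set.univ fun s : ℝ => f (AffineMap.lineMap x y s) :=
    hf.comp_affineMap (AffineMap.lineMap x y)
  have hderiv : HasDerivAt (fun s : ℝ => f (AffineMap.lineMap x y s)) ⟪g, y - x⟫ 0 :=
    hasDerivAt_comp_lineMap (by rwa [AffineMap.lineMap_apply_zero])
  have hslope := hconv.le_slope_of_hasDerivAt (Set.mem_univ 0) (Set.mem_univ 1) one_pos hderiv
  rw [slope_def_field, AffineMap.lineMap_apply_zero, AffineMap.lineMap_apply_one] at hslope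
  linarith

section Lipschitz

variable {f : E → ℝ} {f' : E → E} {L : ℝ} (hf : ∀ z, HasGradientAt f (f' z) z)
  (hlip : ∀ z w, ‖f' z - f' w‖ ≤ L * ‖z - w‖)
include hf hlip

lemma le_add_inner_add_sq_of_lipschitz_gradient (x y : E) :
    f y ≤ f x + ⟪f' x, y - x⟫ + L / 2 * ‖y - x‖ ^ 2 := by
  have hderiv (s : ℝ) := hasDerivAt_comp_lineMap (hf (AffineMap.lineMap x y s))
  let B : ℝ → ℝ := fun s => f x + s * ⟪f' x, y - x⟫ + L / 2 * ‖y - x‖ ^ 2 * s ^ 2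
  have hB (s : ℝ) : HasDerivAt B (⟪f' x, y - x⟫ + L * s * ‖y - x‖ ^ 2) s := by
    refine ((((hasDerivAt_id s).mul_const ⟪f' x, y - x⟫).const_add (f x)).add
      ((hasDerivAt_pow 2 s).const_mul (L / 2 * ‖y - x‖ ^ 2))).congr_deriv ?_
    ring
  have hbound : ∀ s ∈ Set.Ico (0 : ℝ) 1,
      ⟪f' (AffineMap.lineMap x y s), y - x⟫ ≤ ⟪f' x, y - x⟫ + L * s * ‖y - x‖ ^ 2 := by
    intro s hs
    have hnorm : ‖f' (AffineMap.lineMap x y s) - f' x‖ ≤ L * (s * ‖y - x‖) := by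
      simpa [AffineMap.lineMap_apply, norm_smul, abs_of_nonneg hs.1]
        using hlip (AffineMap.lineMap x y s) x
    calc
      ⟪f' (AffineMap.lineMap x y s), y - x⟫
          = ⟪f' x, y - x⟫ + ⟪f' (AffineMap.lineMap x y s) - f' x, y - x⟫ := by
        rw [inner_sub_left]; ring
      _ ≤ ⟪f' x, y - x⟫ + L * (s * ‖y - x‖) * ‖y - x‖ := by
        gcongr
        exact (real_inner_le_norm _ _).trans (by gcongr)
      _ = ⟪f' x, y - x⟫ + L * s * ‖y - x‖ ^ 2 := by ring
  have hle := image_le_of_deriv_right_le_deriv_boundary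
    (fun s _ => (hderiv s).continuousAt.continuousWithinAt) (fun s _ => (hderiv s).hasDerivWithinAt)
    (B := B) (by simp [B]) (fun s _ => (hB s).continuousAt.continuousWithinAt)
    (fun s _ => (hB s).hasDerivWithinAt) hbound (Set.right_mem_Icc.2 zero_le_one)
  simpa [B] using hle

lemma sq_norm_gradient_le_of_lipschitz_gradient (hL : 0 < L) {l : ℝ} (hl : ∀ y, l ≤ f y) (x : E) :
    ‖f' x‖ ^ 2 ≤ 2 * L * (f x - l) := by
  have hgrad_step : l ≤ f x - ‖f' x‖ ^ 2 / (2 * L) :=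
    calc
      l ≤ f (x - L⁻¹ • f' x) := hl _
      _ ≤ f x + ⟪f' x, x - L⁻¹ • f' x - x⟫ + L / 2 * ‖x - L⁻¹ • f' x - x‖ ^ 2 :=
        le_add_inner_add_sq_of_lipschitz_gradient hf hlip _ _
      _ = f x - ‖f' x‖ ^ 2 / (2 * L) := by
        rw [sub_sub_cancel_left, inner_neg_right, real_inner_smul_right, real_inner_self_eq_norm_sq,
          norm_neg, norm_smul, mul_pow, Real.norm_eq_abs, sq_abs]
        field_simp
        ring
  rwa [← div_le_iff₀' (by positivity), le_sub_comm]

end Lipschitz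

end Smooth

section StrongConvexity

variable {n : ℕ} {ψ : EuclideanSpace ℝ (Fin n) → ℝ} {μ : ℝ}
  {x xs p : EuclideanSpace ℝ (Fin n)}

lemma breg_nonneg (hx : IsSubgrad ψ x xs) (y : EuclideanSpace ℝ (Fin n)) : 0 ≤ Breg ψ x xs y := by
  unfold Breg
  linarith [hx y]

lemma half_mul_sq_norm_le_breg (hsc : SubgradStrongConvex ψ μ) (hx : IsSubgrad ψ x xs)
    (y : EuclideanSpace ℝ (Fin n)) : μ / 2 * ‖y - x‖ ^ 2 ≤ Breg ψ x xs y := by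
  unfold Breg
  linarith [hsc x y xs hx]

lemma breg_three_point (x xs x' xs' y : EuclideanSpace ℝ (Fin n)) :
    Breg ψ x' xs' y = Breg ψ x xs y - Breg ψ x xs x' + ⟪xs - xs', y - x'⟫ := by
  simp only [Breg, inner_sub_left, inner_sub_right]
  ring

lemma breg_sub_smul_le (hμ : 0 < μ) (hsc : SubgradStrongConvex ψ μ) (hx : IsSubgrad ψ x xs)
    (t : ℝ) (g x' y : EuclideanSpace ℝ (Fin n)) :
    Breg ψ x' (xs - t • g) y ≤ Breg ψ x xs y + t * ⟪g, y - x⟫ + t ^ 2 * ‖g‖ ^ 2 / (2 * μ) := by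
  have hyoung : t * ⟪g, x - x'⟫ ≤ t ^ 2 * ‖g‖ ^ 2 / (2 * μ) + μ / 2 * ‖x' - x‖ ^ 2 := by
    simpa only [real_inner_smul_left, norm_smul, mul_pow, Real.norm_eq_abs, sq_abs,
      norm_sub_rev x x'] using real_inner_le_norm_sq_div_add hμ (t • g) (x - x')
  calc
    Breg ψ x' (xs - t • g) y
        = Breg ψ x xs y - Breg ψ x xs x' + t * ⟪g, y - x'⟫ := by
      rw [breg_three_point x xs, sub_sub_cancel, real_inner_smul_left]
    _ = Breg ψ x xs y + t * ⟪g, y - x⟫ + (t * ⟪g, x - x'⟫ - Breg ψ x xs x') := by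
      rw [← sub_add_sub_cancel y x x', inner_add_right]
      ring
    _ ≤ Breg ψ x xs y + t * ⟪g, y - x⟫ + t ^ 2 * ‖g‖ ^ 2 / (2 * μ) := by
      linarith [half_mul_sq_norm_le_breg hsc hx x']

lemma inner_sub_le_of_isSubgrad (hμ : 0 < μ) (hsc : SubgradStrongConvex ψ μ)
    (hx : IsSubgrad ψ x p) (q y : EuclideanSpace ℝ (Fin n)) :
    ⟪q, y⟫ - ψ y ≤ ⟪q, x⟫ - ψ x + ‖q - p‖ ^ 2 / (2 * μ) := by
  have hgrowth := hsc x y p hx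
  have hyoung := real_inner_le_norm_sq_div_add hμ (q - p) (y - x)
  simp only [inner_sub_left, inner_sub_right] at hgrowth hyoung
  linarith

lemma fenchel_le_of_isSubgrad (hμ : 0 < μ) (hsc : SubgradStrongConvex ψ μ)
    (hx : IsSubgrad ψ x p) (q : EuclideanSpace ℝ (Fin n)) :
    fenchel ψ q ≤ ⟪q, x⟫ - ψ x + ‖q - p‖ ^ 2 / (2 * μ) :=
  ciSup_le (inner_sub_le_of_isSubgrad hμ hsc hx q)

lemma inner_sub_le_fenchel (hμ : 0 < μ) (hsc : SubgradStrongConvex ψ μ)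
    (hx : IsSubgrad ψ x p) (q y : EuclideanSpace ℝ (Fin n)) : ⟪q, y⟫ - ψ y ≤ fenchel ψ q :=
  le_ciSup (f := fun z => ⟪q, z⟫ - ψ z)
    ⟨_, Set.forall_mem_range.2 (inner_sub_le_of_isSubgrad hμ hsc hx q)⟩ y

lemma hasGradientAt_fenchel_of_isSubgrad (hμ : 0 < μ) (hsc : SubgradStrongConvex ψ μ)
    (hx : IsSubgrad ψ x p) : HasGradientAt (fenchel ψ) x p := by
  have hlower := inner_sub_le_fenchel hμ hsc hx
  have hupper := fenchel_le_of_isSubgrad hμ hsc hx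
  have hp : fenchel ψ p = ⟪p, x⟫ - ψ x := le_antisymm (by simpa using hupper p) (hlower p x)
  have hbound (q) : ‖fenchel ψ q - fenchel ψ p - ⟪x, q - p⟫‖ ≤ 1 / (2 * μ) * ‖‖q - p‖ ^ 2‖ := by
    rw [Real.norm_of_nonneg (sq_nonneg ‖q - p‖), one_div_mul_eq_div, real_inner_comm,
      inner_sub_left, hp, Real.norm_of_nonneg (by linarith [hlower q x])]
    linarith [hupper q]
  rw [hasGradientAt_iff_isLittleO]
  exact (Asymptotics.IsBigO.of_bound _ (.of_forall hbound)).trans_isLittleO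
    (Asymptotics.isLittleO_pow_sub_sub p one_lt_two)

lemma exists_isSubgrad (hμ : 0 < μ) (hψ : ConvexOn ℝ Set.univ ψ) (hsc : SubgradStrongConvex ψ μ)
    (hx : IsSubgrad ψ x xs) (p : EuclideanSpace ℝ (Fin n)) : ∃ z, IsSubgrad ψ z p := by
  have hcont : Continuous fun z => ψ z - ⟪p, z⟫ := by
    have := hψ.locallyLipschitz.continuous
    fun_prop
  have hfar : ∀ y, 2 * ‖p - xs‖ / μ < ‖y - x‖ → ψ x - ⟪p, x⟫ ≤ ψ y - ⟪p, y⟫ := by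
    intro y hy
    rw [div_lt_iff₀ hμ] at hy
    have hgrowth := hsc x y xs hx
    have hcs := real_inner_le_norm (p - xs) (y - x)
    have hquad : ‖p - xs‖ * ‖y - x‖ ≤ μ / 2 * ‖y - x‖ ^ 2 := by
      nlinarith [norm_nonneg (y - x)]
    simp only [inner_sub_left, inner_sub_right] at hgrowth hcs
    linarith
  obtain ⟨z, hz⟩ := hcont.exists_forall_le' x <| by
    filter_upwards [(isCompact_closedBall x (2 * ‖p - xs‖ / μ)).compl_mem_cocompact] with y hy
    exact hfar y (by simpa [dist_eq_norm] using hy)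
  refine ⟨z, fun y => ?_⟩
  rw [inner_sub_right]
  linarith [hz y]

lemma isSubgrad_gradient_fenchel (hμ : 0 < μ) (hψ : ConvexOn ℝ Set.univ ψ)
    (hsc : SubgradStrongConvex ψ μ) (hx : IsSubgrad ψ x xs) (p : EuclideanSpace ℝ (Fin n)) :
    IsSubgrad ψ (gradient (fenchel ψ) p) p := by
  obtain ⟨z, hz⟩ := exists_isSubgrad hμ hψ hsc hx p
  rwa [(hasGradientAt_fenchel_of_isSubgrad hμ hsc hz).gradient]

end StrongConvexity

section Summation

lemma sum_range_sub_div_le {𝕜 : Type*} [Field 𝕜] [LinearOrder 𝕜] [IsStrictOrderedRing 𝕜]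
    {D q : ℕ → 𝕜} {M : 𝕜} (hq : Antitone q) (hqpos : ∀ k, 0 < q k) (N : ℕ)
    (hM : ∀ k ≤ N, D k ≤ M) :
    ∑ k ∈ Finset.range (N + 1), (D k - D (k + 1)) / q k ≤ (M - D (N + 1)) / q N := by
  induction N with
  | zero =>
    rw [zero_add, Finset.sum_range_one]
    have := (hqpos 0).le
    gcongr
    exact hM 0 le_rfl
  | succ N ih =>
    have hgap : 0 ≤ M - D (N + 1) := sub_nonneg.2 (hM _ le_rfl)
    have hpos := hqpos (N + 1)
    calc
      ∑ k ∈ Finset.range (N + 1 + 1), (D k - D (k + 1)) / q k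
          ≤ (M - D (N + 1)) / q N + (D (N + 1) - D (N + 1 + 1)) / q (N + 1) := by
        rw [Finset.sum_range_succ]
        gcongr
        exact ih fun k hk => hM k (hk.trans N.le_succ)
      _ ≤ (M - D (N + 1)) / q (N + 1) + (D (N + 1) - D (N + 1 + 1)) / q (N + 1) := by
        gcongr
        exact hq N.le_succ
      _ = (M - D (N + 1 + 1)) / q (N + 1) := by rw [← add_div, sub_add_sub_cancel]

lemma monotoneOn_mul_one_sub_half : MonotoneOn (fun u : ℝ => u * (1 - u / 2)) (Set.Iic 1) := by
  intro u hu v hv huv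
  simp only [Set.mem_Iic] at hu hv
  nlinarith

lemma antitone_mul_one_sub_half {ι : Type*} [Preorder ι] {lam t : ι → ℝ} (hpos : ∀ k, 0 < lam k)
    (hle : ∀ k, lam k ≤ 1) (hlam : Antitone lam) (ht : ∀ k, 0 ≤ t k / lam k)
    (hanti : Antitone fun k => t k / lam k) : Antitone fun k => t k * (1 - lam k / 2) := by
  have hprod : Antitone fun k => t k / lam k * (lam k * (1 - lam k / 2)) := fun i j hij =>
    mul_le_mul (hanti hij) (monotoneOn_mul_one_sub_half (hle j) (hle i) (hlam hij))
      (mul_nonneg (hpos j).le (by linarith [hle j])) (ht i)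
  convert hprod using 2 with k
  rw [← mul_assoc, div_mul_cancel₀ _ (hpos k).ne']

lemma le_div_add_mul_of_step {lam t a b d : ℝ} (hpos : 0 < lam) (hle : lam ≤ 1) (ht : 0 < t)
    (hb : 0 ≤ b) (hstep : t * (a - lam / 2 * (a + b)) ≤ d) :
    a ≤ d / (t * (1 - lam / 2)) + lam * b := by
  have hhalf : 0 < 1 - lam / 2 := by linarith
  have hb' : lam / 2 * b ≤ (1 - lam / 2) * (lam * b) := by
    nlinarith [mul_nonneg hpos.le hb]
  rw [← sub_le_iff_le_add, le_div_iff₀ (mul_pos ht hhalf)]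
  calc
    (a - lam * b) * (t * (1 - lam / 2)) = t * ((1 - lam / 2) * a - (1 - lam / 2) * (lam * b)) := by
      ring
    _ ≤ t * ((1 - lam / 2) * a - lam / 2 * b) := by gcongr
    _ = t * (a - lam / 2 * (a + b)) := by ring
    _ ≤ d := hstep

lemma sum_range_le_of_step {D a b lam t : ℕ → ℝ} {c M : ℝ} (hpos : ∀ k, 0 < lam k)
    (hle : ∀ k, lam k ≤ 1) (hlam : Antitone lam) (hc : 0 < c) (ht : ∀ k, c ≤ t k / lam k)
    (hanti : Antitone fun k => t k / lam k) (hb : ∀ k, 0 ≤ b k) (hD : ∀ k, 0 ≤ D k)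
    (hstep : ∀ k, t k * (a k - lam k / 2 * (a k + b k)) ≤ D k - D (k + 1))
    (N : ℕ) (hM : ∀ k ≤ N, D k ≤ M) :
    ∑ k ∈ Finset.range (N + 1), a k ≤
      2 * M / (lam N * c) + ∑ k ∈ Finset.range (N + 1), lam k * b k := by
  have hhalf (k) : 1 / 2 ≤ 1 - lam k / 2 := by linarith [hle k]
  have ht' (k) : lam k * c ≤ t k := (le_div_iff₀' (hpos k)).1 (ht k)
  have htpos (k) : 0 < t k := (mul_pos (hpos k) hc).trans_le (ht' k)
  have hq := antitone_mul_one_sub_half hpos hle hlam (fun k => hc.le.trans (ht k)) hanti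
  have hqpos (k) : 0 < t k * (1 - lam k / 2) := mul_pos (htpos k) (by linarith [hhalf k])
  have hM0 : 0 ≤ M := (hD 0).trans (hM 0 N.zero_le)
  calc
    ∑ k ∈ Finset.range (N + 1), a k
        ≤ ∑ k ∈ Finset.range (N + 1),
            ((D k - D (k + 1)) / (t k * (1 - lam k / 2)) + lam k * b k) :=
      Finset.sum_le_sum fun k _ =>
        le_div_add_mul_of_step (hpos k) (hle k) (htpos k) (hb k) (hstep k)
    _ ≤ (M - D (N + 1)) / (t N * (1 - lam N / 2)) + ∑ k ∈ Finset.range (N + 1), lam k * b k := by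
      rw [Finset.sum_add_distrib]
      gcongr
      exact sum_range_sub_div_le hq hqpos N hM
    _ ≤ M / (lam N * c * (1 / 2)) + ∑ k ∈ Finset.range (N + 1), lam k * b k := by
      have := mul_pos (hpos N) hc
      have := htpos N
      gcongr
      · exact sub_le_self M (hD _)
      · exact ht' N
      · exact hhalf N
    _ = 2 * M / (lam N * c) + ∑ k ∈ Finset.range (N + 1), lam k * b k := by
      congr 1
      field_simp

end Summation

section CappedPolyak

variable {E : Type*} [NormedAddCommGroup E] {a c r : ℝ} {g : E}

open Classical in
/-- The Polyak-type ratio `c / ‖g‖²` capped at `r`. The quotient counts as `+∞` when `g = 0`, where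
Lean's division would give `0`. -/
def cappedPolyak (c : ℝ) (g : E) (r : ℝ) : ℝ :=
  if g = 0 then r else min (c / ‖g‖ ^ 2) r

lemma eq_mul_cappedPolyak {t lam : ℝ} (h₀ : g = 0 → t = lam * r)
    (h₁ : g ≠ 0 → t = lam * min (c / ‖g‖ ^ 2) r) : t = lam * cappedPolyak c g r := by
  unfold cappedPolyak
  split_ifs with hg
  · exact h₀ hg
  · exact h₁ hg

lemma cappedPolyak_le : cappedPolyak c g r ≤ r := by
  unfold cappedPolyak
  split_ifs
  · exact le_rfl
  · exact min_le_right _ _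

lemma cappedPolyak_mul_sq_norm_le (hc : 0 ≤ c) : cappedPolyak c g r * ‖g‖ ^ 2 ≤ c := by
  unfold cappedPolyak
  split_ifs with hg
  · simpa [hg]
  · exact (le_div_iff₀ (by positivity)).1 (min_le_left _ _)

lemma le_cappedPolyak (hc : a * ‖g‖ ^ 2 ≤ c) (hr : a ≤ r) : a ≤ cappedPolyak c g r := by
  unfold cappedPolyak
  split_ifs with hg
  · exact hr
  · exact le_min ((le_div_iff₀ (by positivity)).2 hc) hr

end CappedPolyak

/-- The ratio `t_{k-1} / λ_{k-1}`, with the conventions `t_{-1} = γ_b` and `λ_{-1} = λ_0`. -/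
def lastRatio (γb : ℝ) (lam t : ℕ → ℝ) : ℕ → ℝ
  | 0 => γb / lam 0
  | k + 1 => t k / lam k

/-- The stochastic mirror descent iteration in the geometry of `ψ`, with DecmSPS stepsizes, for a
sequence of objectives `F k` with gradients `F' k` and lower bounds `l k`. A minibatch method is the
case where `F k` is a weighted mean over the `k`-th batch. -/
structure IsDecmSPSIteration {n : ℕ} (ψ : EuclideanSpace ℝ (Fin n) → ℝ) (μ : ℝ)
    (F : ℕ → EuclideanSpace ℝ (Fin n) → ℝ)
    (F' : ℕ → EuclideanSpace ℝ (Fin n) → EuclideanSpace ℝ (Fin n))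
    (l lam : ℕ → ℝ) (γb : ℝ) (x xst : ℕ → EuclideanSpace ℝ (Fin n)) (t : ℕ → ℝ) : Prop where
  isSubgrad_zero : IsSubgrad ψ (x 0) (xst 0)
  stepsize_eq : ∀ k, t k =
    lam k * cappedPolyak (μ * (F k (x k) - l k)) (F' k (x k)) (lastRatio γb lam t k)
  dual_succ : ∀ k, xst (k + 1) = xst k - t k • F' k (x k)
  primal_succ : ∀ k, x (k + 1) = gradient (fenchel ψ) (xst (k + 1))

namespace IsDecmSPSIteration

variable {n : ℕ} {ψ : EuclideanSpace ℝ (Fin n) → ℝ} {μ : ℝ}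
  {F : ℕ → EuclideanSpace ℝ (Fin n) → ℝ}
  {F' : ℕ → EuclideanSpace ℝ (Fin n) → EuclideanSpace ℝ (Fin n)}
  {l lam : ℕ → ℝ} {γb : ℝ} {x xst : ℕ → EuclideanSpace ℝ (Fin n)} {t : ℕ → ℝ}
  (h : IsDecmSPSIteration ψ μ F F' l lam γb x xst t)
include h

lemma isSubgrad (hμ : 0 < μ) (hψ : ConvexOn ℝ Set.univ ψ) (hsc : SubgradStrongConvex ψ μ) :
    ∀ k, IsSubgrad ψ (x k) (xst k)
  | 0 => h.isSubgrad_zero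
  | k + 1 => by
    rw [h.primal_succ]
    exact isSubgrad_gradient_fenchel hμ hψ hsc h.isSubgrad_zero _

section Stepsize

variable (hlam : ∀ k, 0 < lam k)
include hlam

lemma stepsize_div (k : ℕ) :
    t k / lam k = cappedPolyak (μ * (F k (x k) - l k)) (F' k (x k)) (lastRatio γb lam t k) := by
  rw [div_eq_iff (hlam k).ne', mul_comm]
  exact h.stepsize_eq k

lemma antitone_stepsize_div : Antitone fun k => t k / lam k :=
  antitone_nat_of_succ_le fun k => (h.stepsize_div hlam (k + 1)).trans_le cappedPolyak_le

lemma stepsize_div_mul_sq_norm_le (hμ : 0 ≤ μ) {k : ℕ} (hl : l k ≤ F k (x k)) :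
    t k / lam k * ‖F' k (x k)‖ ^ 2 ≤ μ * (F k (x k) - l k) := by
  rw [h.stepsize_div hlam]
  exact cappedPolyak_mul_sq_norm_le (mul_nonneg hμ (sub_nonneg.2 hl))

lemma min_le_stepsize_div (hμ : 0 ≤ μ) {L : ℝ} (hL : 0 < L)
    (hgrad : ∀ k, ‖F' k (x k)‖ ^ 2 ≤ 2 * L * (F k (x k) - l k)) (k : ℕ) :
    min (μ / (2 * L)) (γb / lam 0) ≤ t k / lam k := by
  have hpolyak (k) :
      min (μ / (2 * L)) (γb / lam 0) * ‖F' k (x k)‖ ^ 2 ≤ μ * (F k (x k) - l k) :=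
    calc
      min (μ / (2 * L)) (γb / lam 0) * ‖F' k (x k)‖ ^ 2
          ≤ μ / (2 * L) * (2 * L * (F k (x k) - l k)) := by
        gcongr
        · exact min_le_left _ _
        · exact hgrad k
      _ = μ * (F k (x k) - l k) := by field_simp
  rw [h.stepsize_div hlam]
  induction k with
  | zero => exact le_cappedPolyak (hpolyak 0) (min_le_right _ _)
  | succ k ih => exact le_cappedPolyak (hpolyak (k + 1)) (ih.trans_eq (h.stepsize_div hlam k).symm)

lemma stepsize_mul_le_breg_sub_breg_succ (hμ : 0 < μ) (hsc : SubgradStrongConvex ψ μ) {k : ℕ}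
    (hx : IsSubgrad ψ (x k) (xst k)) (ht : 0 ≤ t k) (hl : l k ≤ F k (x k))
    {y : EuclideanSpace ℝ (Fin n)} (hy : F k (x k) + ⟪F' k (x k), y - x k⟫ ≤ F k y) :
    t k * (F k (x k) - F k y - lam k / 2 * (F k (x k) - l k)) ≤
      Breg ψ (x k) (xst k) y - Breg ψ (x (k + 1)) (xst (k + 1)) y := by
  have hstep := breg_sub_smul_le hμ hsc hx (t k) (F' k (x k)) (x (k + 1)) y
  rw [← h.dual_succ] at hstep
  have hquad : t k ^ 2 * ‖F' k (x k)‖ ^ 2 / (2 * μ) ≤ t k * (lam k / 2 * (F k (x k) - l k)) :=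
    have hlamk := hlam k
    calc
      t k ^ 2 * ‖F' k (x k)‖ ^ 2 / (2 * μ)
          = t k * lam k * (t k / lam k * ‖F' k (x k)‖ ^ 2) / (2 * μ) := by field_simp
      _ ≤ t k * lam k * (μ * (F k (x k) - l k)) / (2 * μ) := by
        gcongr ?_ / _
        exact mul_le_mul_of_nonneg_left (h.stepsize_div_mul_sq_norm_le hlam hμ.le hl)
          (by positivity)
      _ = t k * (lam k / 2 * (F k (x k) - l k)) := by field_simp
  have hlin : t k * ⟪F' k (x k), y - x k⟫ ≤ t k * (F k y - F k (x k)) := by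
    gcongr
    linarith
  linarith

end Stepsize

end IsDecmSPSIteration

theorem stmt10_general {n : ℕ} {ψ : EuclideanSpace ℝ (Fin n) → ℝ} {μ : ℝ} (hμ : 0 < μ)
    (hψ : ConvexOn ℝ Set.univ ψ) (hsc : SubgradStrongConvex ψ μ)
    {F : ℕ → EuclideanSpace ℝ (Fin n) → ℝ}
    {F' : ℕ → EuclideanSpace ℝ (Fin n) → EuclideanSpace ℝ (Fin n)}
    (hF : ∀ k, ConvexOn ℝ Set.univ (F k)) (hF' : ∀ k z, HasGradientAt (F k) (F' k z) z)
    {L : ℝ} (hL : 0 < L) (hlip : ∀ k z z', ‖F' k z - F' k z'‖ ≤ L * ‖z - z'‖)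
    {l : ℕ → ℝ} (hl : ∀ k y, l k ≤ F k y)
    {lam : ℕ → ℝ} (hpos : ∀ k, 0 < lam k) (hle : ∀ k, lam k ≤ 1) (hlam : Antitone lam)
    {γb : ℝ} (hγb : 0 < γb) {x xst : ℕ → EuclideanSpace ℝ (Fin n)} {t : ℕ → ℝ}
    (h : IsDecmSPSIteration ψ μ F F' l lam γb x xst t) {K : ℕ} (hK : (Finset.range K).Nonempty)
    (xhat : EuclideanSpace ℝ (Fin n)) :
    ∑ k ∈ Finset.range K, (F k (x k) - F k xhat) ≤
      2 * ((Finset.range K).sup' hK fun k => Breg ψ (x k) (xst k) xhat) /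
        (lam (K - 1) * min (μ / (2 * L)) (γb / lam 0)) +
      ∑ k ∈ Finset.range K, lam k * (F k xhat - l k) := by
  obtain ⟨N, rfl⟩ := Nat.exists_eq_succ_of_ne_zero (Finset.nonempty_range_iff.1 hK)
  have hLtilde : 0 < min (μ / (2 * L)) (γb / lam 0) :=
    lt_min (by positivity) (div_pos hγb (hpos 0))
  have hratio := h.min_le_stepsize_div hpos hμ.le hL fun k =>
    sq_norm_gradient_le_of_lipschitz_gradient (hF' k) (hlip k) hL (hl k) (x k)
  have ht (k) : 0 ≤ t k :=
    ((div_pos_iff_of_pos_right (hpos k)).1 (hLtilde.trans_le (hratio k))).le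
  have hsub := h.isSubgrad hμ hψ hsc
  refine sum_range_le_of_step hpos hle hlam hLtilde hratio (h.antitone_stepsize_div hpos)
    (fun k => sub_nonneg.2 (hl k xhat)) (fun k => breg_nonneg (hsub k) xhat) (fun k => ?_) N
    fun k hk => Finset.le_sup' (fun k => Breg ψ (x k) (xst k) xhat) (Finset.mem_range_succ_iff.2 hk)
  rw [sub_add_sub_cancel]
  exact h.stepsize_mul_le_breg_sub_breg_succ hpos hμ hsc (hsub k) (ht k) (hl k (x k))
    (add_inner_gradient_le_of_convexOn (hF k) (hF' k (x k)) xhat)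

/-- the finite-horizon sum bound for the SBBP iterates with DecmSPS stepsizes:
`∑_{k<K} ∑_{i∈J_k} w_{i,k}(f_i(x_k) − f_i(x̂)) ≤
  2D/(λ_{K−1}·L̃) + ∑_{k<K} λ_k·∑_{i∈J_k} w_{i,k}(f_i(x̂) − l_{J_k}*)`,
where `D = max_{0≤k≤K−1} D_ψ^{x_k*}(x_k, x̂)` and `L̃ = min{μ/(2 L_max), γ_b/λ_0}`. -/
theorem stmt10 {n m : ℕ} (hm : 0 < m)
    (ψ : EuclideanSpace ℝ (Fin n) → ℝ) (μ : ℝ) (hμ : 0 < μ)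
    (hψconv : ConvexOn ℝ Set.univ ψ) (hsc : SubgradStrongConvex ψ μ)
    (f : Fin m → EuclideanSpace ℝ (Fin n) → ℝ)
    (hfconv : ∀ i, ConvexOn ℝ Set.univ (f i))
    (f' : Fin m → EuclideanSpace ℝ (Fin n) → EuclideanSpace ℝ (Fin n))
    (hdiff : ∀ i z, HasGradientAt (f i) (f' i z) z)
    (L : Fin m → ℝ) (hL : ∀ i, 0 < L i)
    (hlip : ∀ i z w, ‖f' i z - f' i w‖ ≤ L i * ‖z - w‖)
    (Lmax : ℝ) (hLmax : Lmax = ⨆ i, L i)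
    (K : ℕ) (hK : 1 ≤ K)
    (J : ℕ → Finset (Fin m)) (w : ℕ → Fin m → ℝ)
    (hw : ∀ k, ∀ i ∈ J k, 0 < w k i) (hwsum : ∀ k, ∑ i ∈ J k, w k i = 1)
    (l : ℕ → ℝ) (hl : ∀ k y, l k ≤ ∑ i ∈ J k, w k i * f i y)
    (lam : ℕ → ℝ) (hlampos : ∀ k, 0 < lam k) (hlamle : ∀ k, lam k ≤ 1)
    (hlammono : ∀ k, lam (k + 1) ≤ lam k)
    (γb : ℝ) (hγb : 0 < γb)
    (x xst : ℕ → EuclideanSpace ℝ (Fin n))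
    (hx0s : IsSubgrad ψ (x 0) (xst 0))
    (t : ℕ → ℝ)
    (ht0a : ∑ i ∈ J 0, w 0 i • f' i (x 0) = 0 → t 0 = lam 0 * (γb / lam 0))
    (ht0b : ∑ i ∈ J 0, w 0 i • f' i (x 0) ≠ 0 →
      t 0 = lam 0 * min
        (μ * (∑ i ∈ J 0, w 0 i * (f i (x 0) - l 0)) / ‖∑ i ∈ J 0, w 0 i • f' i (x 0)‖ ^ 2)
        (γb / lam 0))
    (hta : ∀ k, ∑ i ∈ J (k + 1), w (k + 1) i • f' i (x (k + 1)) = 0 →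
      t (k + 1) = lam (k + 1) * (t k / lam k))
    (htb : ∀ k, ∑ i ∈ J (k + 1), w (k + 1) i • f' i (x (k + 1)) ≠ 0 →
      t (k + 1) = lam (k + 1) * min
        (μ * (∑ i ∈ J (k + 1), w (k + 1) i * (f i (x (k + 1)) - l (k + 1))) /
          ‖∑ i ∈ J (k + 1), w (k + 1) i • f' i (x (k + 1))‖ ^ 2)
        (t k / lam k))
    (hupd : ∀ k, xst (k + 1) = xst k - t k • ∑ i ∈ J k, w k i • f' i (x k))
    (hxupd : ∀ k, x (k + 1) = gradient (fenchel ψ) (xst (k + 1)))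
    (xhat : EuclideanSpace ℝ (Fin n)) :
    ∑ k ∈ Finset.range K, ∑ i ∈ J k, w k i * (f i (x k) - f i xhat) ≤
      2 * ((Finset.range K).sup'
          (Finset.nonempty_range_iff.mpr (Nat.one_le_iff_ne_zero.mp hK))
          fun k => Breg ψ (x k) (xst k) xhat) /
        (lam (K - 1) * min (μ / (2 * Lmax)) (γb / lam 0)) +
      ∑ k ∈ Finset.range K, lam k * ∑ i ∈ J k, w k i * (f i xhat - l k) := by
  have hL_le (i) : L i ≤ Lmax := hLmax ▸ le_ciSup (Set.finite_range L).bddAbove i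
  have hw' (k) : ∀ i ∈ J k, 0 ≤ w k i := fun i hi => (hw k i hi).le
  have hgap (k y) : ∑ i ∈ J k, w k i * (f i y - l k) = ∑ i ∈ J k, w k i * f i y - l k := by
    simp only [mul_sub, Finset.sum_sub_distrib, ← Finset.sum_mul, hwsum, one_mul]
  have hdiff_sum (k y z) : ∑ i ∈ J k, w k i * (f i y - f i z) =
      ∑ i ∈ J k, w k i * f i y - ∑ i ∈ J k, w k i * f i z := by
    simp only [mul_sub, Finset.sum_sub_distrib]
  simp only [hgap] at ht0b htb
  have hiter : IsDecmSPSIteration ψ μ (fun k y => ∑ i ∈ J k, w k i * f i y)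
      (fun k y => ∑ i ∈ J k, w k i • f' i y) l lam γb x xst t :=
    ⟨hx0s, by
      rintro (_ | k)
      exacts [eq_mul_cappedPolyak ht0a ht0b, eq_mul_cappedPolyak (hta k) (htb k)], hupd, hxupd⟩
  have hlip_sum (k z z') :
      ‖∑ i ∈ J k, w k i • f' i z - ∑ i ∈ J k, w k i • f' i z'‖ ≤ Lmax * ‖z - z'‖ :=
    norm_sum_smul_sub_sum_smul_le (hw' k) (hwsum k) fun i _ =>
      (hlip i z z').trans (by gcongr; exact hL_le i)
  simp only [hgap, hdiff_sum]
  exact stmt10_general hμ hψconv hsc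
    (fun k => convexOn_sum_mul convex_univ (hw' k) fun i _ => hfconv i)
    (fun k z => hasGradientAt_sum_mul fun i _ => hdiff i z) ((hL ⟨0, hm⟩).trans_le (hL_le _))
    hlip_sum hl hlampos hlamle (antitone_nat_of_succ_le hlammono) hγb hiter _ xhat
end
end

section
/- Let ψ : ℝ^n → ℝ be μ-strongly convex and differentiable with L_ψ-Lipschitz gradient, and let f_1, …, f_m : ℝ^n → ℝ be μ_f-strongly convex (μ_f > 0) and differentiable with L_i-Lipschitz gradients, nonnegative, with f_i(x) = 0 if and only if x ∈ C_i; suppose x̂ ∈ C = ∩_{i=1}^m C_i (nonempty); L_max = max_i L_i. Fix x ∈ ℝ^n, a subset J ⊆ {1,…,m}, weights w_i > 0 with ∑_{i∈J} w_i = 1, a stepsize t ∈ (0, μ/L_max], and let x⁺ = ∇ψ*(∇ψ(x) − t·∑_{i∈J} w_i∇f_i(x)). Then D_ψ(x⁺, x̂) ≤ ( 1 − (μ_f/L_ψ)·t )·D_ψ(x, x̂), where D_ψ(u, v) = ψ(v) − ψ(u) − ⟨∇ψ(u), v − u⟩. -/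
/-!
The argument is the mirror-descent analysis under relative smoothness, for the single objective
`F = ∑ w i * f i`. Write `g = ∇F x`, and let `z` be the point with `∇ψ z = ∇ψ x - t g`. It exists
because `∇ψ` is strongly monotone and Lipschitz, hence onto, and it equals `∇ψ* (∇ψ x - t g)`. The
three-point identity together with the definition of `D_F` gives
`D_ψ(z, x̂) = D_ψ(x, x̂) - (D_ψ(x, z) - t D_F(x, z)) - t D_F(x, x̂) - t (F z - F x̂)`.
The step size makes the first bracket nonnegative, minimality of `x̂` does the same for the last
one, and `D_F(x, x̂) ≥ (μf / 2) ‖x̂ - x‖² ≥ (μf / Lψ) D_ψ(x, x̂)`.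
-/

open MeasureTheory ProbabilityTheory RealInnerProductSpace
open scoped BigOperators

noncomputable section

section Taylor

variable {E F : Type*} [NormedAddCommGroup E] [NormedSpace ℝ E]
  [NormedAddCommGroup F] [NormedSpace ℝ F]

theorem norm_sub_sub_le_of_fderiv_lipschitz {f : E → F} {f' : E → E →L[ℝ] F} {K : ℝ} {x : E}
    (hf : ∀ z, HasFDerivAt f (f' z) z) (hlip : ∀ z, ‖f' z - f' x‖ ≤ K * ‖z - x‖) (y : E) :
    ‖f y - f x - f' x (y - x)‖ ≤ K / 2 * ‖y - x‖ ^ 2 := by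
  set d := y - x with hd
  let r : ℝ → F := fun s => f (x + s • d) - f x - s • f' x d
  have hr (s : ℝ) : HasDerivAt r ((f' (x + s • d) - f' x) d) s := by
    have hline : HasDerivAt (fun s : ℝ => x + s • d) d s := by
      simpa using ((hasDerivAt_id s).smul_const d).const_add x
    simpa using! (((hf _).comp_hasDerivAt s hline).sub_const (f x)).sub
      ((hasDerivAt_id s).smul_const (f' x d))
  have hquad (s : ℝ) : HasDerivAt (fun s => K / 2 * ‖d‖ ^ 2 * s ^ 2) (K * ‖d‖ ^ 2 * s) s := by
    refine ((hasDerivAt_pow 2 s).const_mul _).congr_deriv ?_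
    push_cast
    ring
  have hbound : ∀ s ∈ Set.Ico (0 : ℝ) 1, ‖(f' (x + s • d) - f' x) d‖ ≤ K * ‖d‖ ^ 2 * s := by
    intro s hs
    calc ‖(f' (x + s • d) - f' x) d‖
        ≤ K * ‖x + s • d - x‖ * ‖d‖ := ContinuousLinearMap.le_of_opNorm_le _ (hlip _) d
      _ = K * ‖d‖ ^ 2 * s := by
        rw [add_sub_cancel_left, norm_smul, Real.norm_of_nonneg hs.1]
        ring
  have hr_one := image_norm_le_of_norm_deriv_right_le_deriv_boundary
    (fun s _ => (hr s).continuousAt.continuousWithinAt) (fun s _ => (hr s).hasDerivWithinAt)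
    (by simp [r]) hquad hbound (Set.right_mem_Icc.2 zero_le_one)
  simpa [r, hd] using hr_one

end Taylor

section Bregman

variable {E : Type*} [NormedAddCommGroup E] [InnerProductSpace ℝ E]

/-- The Bregman distance from `u` to `v`, computed with slope `p` at `u`. This is `Breg` on an
arbitrary real inner product space; the slope is an argument so that no differentiability is
built into the definition. -/
def bregmanDist (ψ : E → ℝ) (u p v : E) : ℝ :=
  ψ v - ψ u - ⟪p, v - u⟫

theorem le_bregmanDist_iff {ψ : E → ℝ} {u p v : E} {a : ℝ} :
    a ≤ bregmanDist ψ u p v ↔ ψ u + ⟪p, v - u⟫ + a ≤ ψ v := by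
  rw [bregmanDist, sub_sub, le_sub_iff_add_le']

theorem bregmanDist_sum_smul {ι : Type*} (J : Finset ι) (w : ι → ℝ) (f : ι → E → ℝ) (p : ι → E)
    (u v : E) :
    bregmanDist (fun y => ∑ i ∈ J, w i * f i y) u (∑ i ∈ J, w i • p i) v =
      ∑ i ∈ J, w i * bregmanDist (f i) u (p i) v := by
  simp only [bregmanDist, sum_inner, real_inner_smul_left, mul_sub, Finset.sum_sub_distrib]

theorem bregmanDist_three_point (ψ : E → ℝ) (u p g z v : E) :
    bregmanDist ψ z (p - g) v =
      bregmanDist ψ u p v - bregmanDist ψ u p z + ⟪g, v - z⟫ := by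
  simp only [bregmanDist, inner_sub_left, inner_sub_right]
  ring

theorem bregmanDist_le_of_gradient_lipschitz [CompleteSpace E] {f : E → ℝ} {f' : E → E} {K : ℝ}
    {x : E} (hf : ∀ z, HasGradientAt f (f' z) z) (hlip : ∀ z, ‖f' z - f' x‖ ≤ K * ‖z - x‖)
    (y : E) : bregmanDist f x (f' x) y ≤ K / 2 * ‖y - x‖ ^ 2 := by
  refine (le_abs_self _).trans ?_
  refine norm_sub_sub_le_of_fderiv_lipschitz (fun z => (hf z).hasFDerivAt) (fun z => ?_) y
  rw [← map_sub, LinearIsometryEquiv.norm_map]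
  exact hlip z

theorem mul_bregmanDist_le_bregmanDist [CompleteSpace E] {f ψ : E → ℝ} {f' : E → E} {x p : E}
    {c K μ : ℝ} (hc : 0 ≤ c) (hcK : c * K ≤ μ) (hf : ∀ z, HasGradientAt f (f' z) z)
    (hlip : ∀ z, ‖f' z - f' x‖ ≤ K * ‖z - x‖)
    (hsc : ∀ v, ψ x + ⟪p, v - x⟫ + μ / 2 * ‖v - x‖ ^ 2 ≤ ψ v) (y : E) :
    c * bregmanDist f x (f' x) y ≤ bregmanDist ψ x p y :=
  calc c * bregmanDist f x (f' x) y
      ≤ c * (K / 2 * ‖y - x‖ ^ 2) := by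
        gcongr
        exact bregmanDist_le_of_gradient_lipschitz hf hlip y
    _ = c * K / 2 * ‖y - x‖ ^ 2 := by ring
    _ ≤ μ / 2 * ‖y - x‖ ^ 2 := by gcongr
    _ ≤ bregmanDist ψ x p y := le_bregmanDist_iff.2 (hsc y)

theorem bregmanDist_mirror_step_le {ψ F : E → ℝ} {x p g z y : E} {t κ : ℝ} (ht : 0 ≤ t)
    (hsmooth : t * bregmanDist F x g z ≤ bregmanDist ψ x p z)
    (hconvex : κ * bregmanDist ψ x p y ≤ bregmanDist F x g y) (hmin : F y ≤ F z) :
    bregmanDist ψ z (p - t • g) y ≤ (1 - κ * t) * bregmanDist ψ x p y := by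
  have hinner : ⟪g, y - z⟫ = F y - F z - bregmanDist F x g y + bregmanDist F x g z := by
    simp only [bregmanDist, inner_sub_right]
    ring
  have hconvex_t := mul_le_mul_of_nonneg_left hconvex ht
  have hmin_t := mul_le_mul_of_nonneg_left hmin ht
  rw [bregmanDist_three_point ψ x p, real_inner_smul_left, hinner]
  linarith

end Bregman

section Surjectivity

variable {E : Type*} [NormedAddCommGroup E] [InnerProductSpace ℝ E]

theorem mul_norm_sub_sq_le_inner_of_strongly_convex {ψ : E → ℝ} {ψ' : E → E} {μ : ℝ}
    (hsc : ∀ u v, ψ u + ⟪ψ' u, v - u⟫ + μ / 2 * ‖v - u‖ ^ 2 ≤ ψ v) (u v : E) :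
    μ * ‖u - v‖ ^ 2 ≤ ⟪ψ' u - ψ' v, u - v⟫ := by
  have huv := hsc u v
  have hvu := hsc v u
  rw [← neg_sub u v, inner_neg_right, norm_neg] at huv
  rw [inner_sub_left]
  linarith

-- The step `μ / K ^ 2` minimizes the squared contraction constant `1 - 2 * τ * μ + τ ^ 2 * K ^ 2`.
theorem norm_sub_smul_sub_le_of_strongly_monotone {A : E → E} {μ K : ℝ} (hμ : 0 < μ) (hK : 0 < K)
    (hmono : ∀ u v, μ * ‖u - v‖ ^ 2 ≤ ⟪A u - A v, u - v⟫)
    (hlip : ∀ u v, ‖A u - A v‖ ≤ K * ‖u - v‖) (u v : E) :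
    ‖(u - v) - (μ / K ^ 2) • (A u - A v)‖ ≤ √(1 - μ ^ 2 / K ^ 2) * ‖u - v‖ := by
  have hsq : ‖(u - v) - (μ / K ^ 2) • (A u - A v)‖ ^ 2 ≤ (1 - μ ^ 2 / K ^ 2) * ‖u - v‖ ^ 2 := by
    calc ‖(u - v) - (μ / K ^ 2) • (A u - A v)‖ ^ 2
        = ‖u - v‖ ^ 2 - 2 * (μ / K ^ 2) * ⟪A u - A v, u - v⟫
            + (μ / K ^ 2) ^ 2 * ‖A u - A v‖ ^ 2 := by
          rw [norm_sub_sq_real, real_inner_smul_right, real_inner_comm, norm_smul, mul_pow,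
            Real.norm_eq_abs, sq_abs]
          ring
      _ ≤ ‖u - v‖ ^ 2 - 2 * (μ / K ^ 2) * (μ * ‖u - v‖ ^ 2)
            + (μ / K ^ 2) ^ 2 * (K * ‖u - v‖) ^ 2 := by
          gcongr
          · exact hmono u v
          · exact hlip u v
      _ = (1 - μ ^ 2 / K ^ 2) * ‖u - v‖ ^ 2 := by
          field_simp
          ring
  rw [← Real.sqrt_sq (norm_nonneg (u - v)), ← Real.sqrt_mul' _ (sq_nonneg _)]
  exact Real.le_sqrt_of_sq_le hsq

theorem surjective_of_strongly_monotone_of_lipschitz [CompleteSpace E] {A : E → E} {μ K : ℝ}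
    (hμ : 0 < μ) (hK : 0 < K) (hmono : ∀ u v, μ * ‖u - v‖ ^ 2 ≤ ⟪A u - A v, u - v⟫)
    (hlip : ∀ u v, ‖A u - A v‖ ≤ K * ‖u - v‖) : Function.Surjective A := by
  intro p
  let T : E → E := fun v => v - (μ / K ^ 2) • (A v - p)
  have hT : ContractingWith ⟨√(1 - μ ^ 2 / K ^ 2), Real.sqrt_nonneg _⟩ T := by
    refine ⟨?_, LipschitzWith.of_dist_le_mul fun u v => ?_⟩
    · have hrate : √(1 - μ ^ 2 / K ^ 2) < 1 :=
        (Real.sqrt_lt' one_pos).2 (by rw [one_pow]; exact sub_lt_self 1 (by positivity))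
      exact hrate
    · have hdiff : T u - T v = (u - v) - (μ / K ^ 2) • (A u - A v) := by
        simp only [T]
        module
      rw [dist_eq_norm, dist_eq_norm, hdiff]
      exact norm_sub_smul_sub_le_of_strongly_monotone hμ hK hmono hlip u v
  obtain ⟨z, hz⟩ : ∃ z, T z = z := ⟨_, hT.fixedPoint_isFixedPt⟩
  have hstep : (μ / K ^ 2) • (A z - p) = 0 := sub_eq_self.1 hz
  exact ⟨z, sub_eq_zero.1 ((smul_eq_zero_iff_right (by positivity)).1 hstep)⟩

end Surjectivity

section Conjugate

variable {E : Type*} [NormedAddCommGroup E] [InnerProductSpace ℝ E]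

/-- The Fenchel conjugate of `ψ`; this is `fenchel` on an arbitrary real inner product space. It is
real-valued, so it takes the junk value `0` at slopes `p` where the supremum is infinite. -/
def fenchelConjugate (ψ : E → ℝ) (p : E) : ℝ :=
  ⨆ z, (⟪p, z⟫ - ψ z)

variable {ψ : E → ℝ} {μ : ℝ} {z p : E}

theorem inner_sub_le_of_strong_subgradient (hμ : 0 < μ)
    (h : ∀ v, ψ z + ⟪p, v - z⟫ + μ / 2 * ‖v - z‖ ^ 2 ≤ ψ v) (q v : E) :
    ⟪q, v⟫ - ψ v ≤ ⟪q, z⟫ - ψ z + μ⁻¹ / 2 * ‖q - p‖ ^ 2 := by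
  have hyoung : ⟪q - p, v - z⟫ ≤ μ / 2 * ‖v - z‖ ^ 2 + μ⁻¹ / 2 * ‖q - p‖ ^ 2 := by
    have hprod := real_inner_le_norm (q - p) (v - z)
    have hsq := two_mul_le_add_mul_sq (a := ‖v - z‖) (b := ‖q - p‖) hμ
    linarith
  have hv := h v
  simp only [inner_sub_left, inner_sub_right] at hyoung hv
  linarith

theorem fenchelConjugate_le_of_strong_subgradient (hμ : 0 < μ)
    (h : ∀ v, ψ z + ⟪p, v - z⟫ + μ / 2 * ‖v - z‖ ^ 2 ≤ ψ v) (q : E) :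
    fenchelConjugate ψ q ≤ ⟪q, z⟫ - ψ z + μ⁻¹ / 2 * ‖q - p‖ ^ 2 :=
  ciSup_le (inner_sub_le_of_strong_subgradient hμ h q)

theorem le_fenchelConjugate_of_strong_subgradient (hμ : 0 < μ)
    (h : ∀ v, ψ z + ⟪p, v - z⟫ + μ / 2 * ‖v - z‖ ^ 2 ≤ ψ v) (q : E) :
    ⟪q, z⟫ - ψ z ≤ fenchelConjugate ψ q :=
  le_ciSup (f := fun v => ⟪q, v⟫ - ψ v)
    ⟨_, Set.forall_mem_range.2 (inner_sub_le_of_strong_subgradient hμ h q)⟩ z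

theorem hasGradientAt_fenchelConjugate_of_strong_subgradient [CompleteSpace E] (hμ : 0 < μ)
    (h : ∀ v, ψ z + ⟪p, v - z⟫ + μ / 2 * ‖v - z‖ ^ 2 ≤ ψ v) :
    HasGradientAt (fenchelConjugate ψ) z p := by
  have hle := fenchelConjugate_le_of_strong_subgradient hμ h
  have hge := le_fenchelConjugate_of_strong_subgradient hμ h
  have hval : fenchelConjugate ψ p = ⟪p, z⟫ - ψ z := le_antisymm (by simpa using hle p) (hge p)
  rw [hasGradientAt_iff_isLittleO]
  refine Asymptotics.IsBigO.trans_isLittleO (g := fun q => ‖q - p‖ ^ 2) ?_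
    (by simpa using Asymptotics.isLittleO_pow_sub_sub p one_lt_two)
  refine Asymptotics.IsBigO.of_bound (μ⁻¹ / 2) (Filter.Eventually.of_forall fun q => ?_)
  have hleq := hle q
  have hgeq := hge q
  rw [hval, inner_sub_right, real_inner_comm q z, real_inner_comm p z,
    Real.norm_of_nonneg (by linarith), Real.norm_of_nonneg (by positivity)]
  linarith

theorem apply_gradient_fenchelConjugate [CompleteSpace E] {ψ' : E → E} {K : ℝ} (hμ : 0 < μ)
    (hK : 0 < K) (hsc : ∀ u v, ψ u + ⟪ψ' u, v - u⟫ + μ / 2 * ‖v - u‖ ^ 2 ≤ ψ v)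
    (hlip : ∀ u v, ‖ψ' u - ψ' v‖ ≤ K * ‖u - v‖) (q : E) :
    ψ' (gradient (fenchelConjugate ψ) q) = q := by
  obtain ⟨z, rfl⟩ := surjective_of_strongly_monotone_of_lipschitz hμ hK
    (mul_norm_sub_sq_le_inner_of_strongly_convex hsc) hlip q
  rw [(hasGradientAt_fenchelConjugate_of_strong_subgradient hμ (hsc z)).gradient]

end Conjugate

theorem stmt18_general {E ι : Type*} [NormedAddCommGroup E] [InnerProductSpace ℝ E]
    [CompleteSpace E] {ψ : E → ℝ} {ψ' : E → E} {μ Lψ : ℝ} (hμ : 0 < μ)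
    (hψ : ∀ z, HasGradientAt ψ (ψ' z) z)
    (hψsc : ∀ u v, ψ u + ⟪ψ' u, v - u⟫ + μ / 2 * ‖v - u‖ ^ 2 ≤ ψ v)
    (hLψ : 0 < Lψ) (hψlip : ∀ u v, ‖ψ' u - ψ' v‖ ≤ Lψ * ‖u - v‖)
    {J : Finset ι} {f : ι → E → ℝ} {f' : ι → E → E} {μf : ℝ} {L : ι → ℝ}
    (hf : ∀ i ∈ J, ∀ z, HasGradientAt (f i) (f' i z) z) (hμf : 0 ≤ μf)
    (hfsc : ∀ i ∈ J, ∀ u v, f i u + ⟪f' i u, v - u⟫ + μf / 2 * ‖v - u‖ ^ 2 ≤ f i v)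
    (hflip : ∀ i ∈ J, ∀ u v, ‖f' i u - f' i v‖ ≤ L i * ‖u - v‖)
    {xhat : E} (hmin : ∀ i ∈ J, ∀ z, f i xhat ≤ f i z)
    {w : ι → ℝ} (hw : ∀ i ∈ J, 0 ≤ w i) (hwsum : ∑ i ∈ J, w i = 1)
    {t : ℝ} (ht : 0 ≤ t) (htL : ∀ i ∈ J, t * L i ≤ μ) (x : E) :
    bregmanDist ψ (gradient (fenchelConjugate ψ) (ψ' x - t • ∑ i ∈ J, w i • f' i x))
        (ψ' (gradient (fenchelConjugate ψ) (ψ' x - t • ∑ i ∈ J, w i • f' i x))) xhat ≤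
      (1 - μf / Lψ * t) * bregmanDist ψ x (ψ' x) xhat := by
  set q := ψ' x - t • ∑ i ∈ J, w i • f' i x with hq
  set z := gradient (fenchelConjugate ψ) q
  have hmirror : ψ' z = q := apply_gradient_fenchelConjugate hμ hLψ hψsc hψlip q
  have hsmooth : ∀ i ∈ J, t * bregmanDist (f i) x (f' i x) z ≤ bregmanDist ψ x (ψ' x) z :=
    fun i hi => mul_bregmanDist_le_bregmanDist ht (htL i hi) (hf i hi)
      (fun y => hflip i hi y x) (hψsc x) z
  have hconvex : ∀ i ∈ J,
      μf / Lψ * bregmanDist ψ x (ψ' x) xhat ≤ bregmanDist (f i) x (f' i x) xhat :=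
    fun i hi => mul_bregmanDist_le_bregmanDist (div_nonneg hμf hLψ.le)
      (div_mul_cancel₀ μf hLψ.ne').le hψ (fun y => hψlip y x) (hfsc i hi x) xhat
  rw [hmirror, hq]
  refine bregmanDist_mirror_step_le (F := fun y => ∑ i ∈ J, w i * f i y) ht ?_ ?_ ?_
  · simp only [bregmanDist_sum_smul, Finset.mul_sum, mul_left_comm t]
    exact (convex_Iic (bregmanDist ψ x (ψ' x) z)).sum_mem hw hwsum hsmooth
  · rw [bregmanDist_sum_smul]
    exact (convex_Ici (μf / Lψ * bregmanDist ψ x (ψ' x) xhat)).sum_mem hw hwsum hconvex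
  · exact Finset.sum_le_sum fun i hi => mul_le_mul_of_nonneg_left (hmin i hi z) (hw i hi)

/-- one-step linear contraction to the solution of the bilevel problem:
for smooth strongly convex `ψ` and strongly convex `f_i`, with `x̂ ∈ C` and stepsize
`t ∈ (0, μ/L_max]`, the step `x⁺ = ∇ψ*(∇ψ(x) − t·∑_{i∈J} w_i ∇f_i(x))` satisfies
`D_ψ(x⁺, x̂) ≤ (1 − (μ_f/L_ψ)·t)·D_ψ(x, x̂)`. -/
theorem stmt18 {n m : ℕ} (hm : 0 < m)
    (ψ : EuclideanSpace ℝ (Fin n) → ℝ) (μ : ℝ) (hμ : 0 < μ)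
    (ψ' : EuclideanSpace ℝ (Fin n) → EuclideanSpace ℝ (Fin n))
    (hψdiff : ∀ z, HasGradientAt ψ (ψ' z) z)
    (hψsc : ∀ u v, ψ u + ⟪ψ' u, v - u⟫ + μ / 2 * ‖v - u‖ ^ 2 ≤ ψ v)
    (Lψ : ℝ) (hLψ : 0 < Lψ)
    (hψlip : ∀ u v, ‖ψ' u - ψ' v‖ ≤ Lψ * ‖u - v‖)
    (f : Fin m → EuclideanSpace ℝ (Fin n) → ℝ)
    (C : Fin m → Set (EuclideanSpace ℝ (Fin n)))
    (f' : Fin m → EuclideanSpace ℝ (Fin n) → EuclideanSpace ℝ (Fin n))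
    (hdiff : ∀ i z, HasGradientAt (f i) (f' i z) z)
    (μf : ℝ) (hμf : 0 < μf)
    (hfsc : ∀ i u v, f i u + ⟪f' i u, v - u⟫ + μf / 2 * ‖v - u‖ ^ 2 ≤ f i v)
    (L : Fin m → ℝ) (hL : ∀ i, 0 < L i)
    (hlip : ∀ i z w, ‖f' i z - f' i w‖ ≤ L i * ‖z - w‖)
    (Lmax : ℝ) (hLmax : Lmax = ⨆ i, L i)
    (hnonneg : ∀ i z, 0 ≤ f i z)
    (hzero : ∀ i z, f i z = 0 ↔ z ∈ C i)
    (xhat : EuclideanSpace ℝ (Fin n)) (hxhat : xhat ∈ ⋂ i, C i)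
    (x : EuclideanSpace ℝ (Fin n))
    (J : Finset (Fin m)) (w : Fin m → ℝ)
    (hw : ∀ i ∈ J, 0 < w i) (hwsum : ∑ i ∈ J, w i = 1)
    (t : ℝ) (htpos : 0 < t) (htle : t ≤ μ / Lmax) :
    Breg ψ (gradient (fenchel ψ) (ψ' x - t • ∑ i ∈ J, w i • f' i x))
        (ψ' (gradient (fenchel ψ) (ψ' x - t • ∑ i ∈ J, w i • f' i x))) xhat ≤
      (1 - μf / Lψ * t) * Breg ψ x (ψ' x) xhat := by
  have hmin (i : Fin m) (z) : f i xhat ≤ f i z :=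
    ((hzero i xhat).2 (Set.mem_iInter.1 hxhat i)).trans_le (hnonneg i z)
  have htL (i : Fin m) : t * L i ≤ μ := by
    have hLi : L i ≤ Lmax := hLmax ▸ le_ciSup (Set.finite_range L).bddAbove i
    exact (le_div_iff₀ (hL i)).1 (htle.trans (div_le_div_of_nonneg_left hμ.le (hL i) hLi))
  exact stmt18_general hμ hψdiff hψsc hLψ hψlip (fun i _ => hdiff i) hμf.le (fun i _ => hfsc i)
    (fun i _ => hlip i) (fun i _ => hmin i) (fun i hi => (hw i hi).le) hwsum htpos.le
    (fun i _ => htL i) x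
end
end
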